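/- Let Γ be a finitely generated group and Z a uniformly recurrent subgroup of Γ. Then Z is coamenable if and only if every Z-proper Γ-system (X,Γ,α), with X nonempty compact metrizable, admits a Γ-invariant Borel probability measure on X. -/

import Mathlib

open scoped Classical

/-- Conjugation action of a group on its subgroups: `g • H = gHg⁻¹`. -/
def conjSub {Γ : Type*} [Group Γ] (g : Γ) (H : Subgroup Γ) : Subgroup Γ :=
  Subgroup.map (MulAut.conj g).toMonoidHom H

/-- The Chabauty-type topology on `Sub(Γ)`: the topology induced from the product
topology on `{0,1}^Γ` via `H ↦ (γ ↦ decide (γ ∈ H))`. -/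
noncomputable instance chabauty {Γ : Type*} [Group Γ] : TopologicalSpace (Subgroup Γ) :=
  TopologicalSpace.induced
    (fun H (g : Γ) => @decide (g ∈ H) (Classical.dec _)) inferInstance

/-- A uniformly recurrent subgroup: a nonempty, closed, conjugation-invariant subset of
`Sub(Γ)` on which every conjugation orbit is dense. -/
structure IsURS {Γ : Type*} [Group Γ] (Z : Set (Subgroup Γ)) : Prop where
  nonempty : Z.Nonempty
  closed : IsClosed Z
  invariant : ∀ g : Γ, ∀ H ∈ Z, conjSub g H ∈ Z
  minimal : ∀ H ∈ Z, ∀ K ∈ Z, K ∈ closure {L : Subgroup Γ | ∃ g : Γ, conjSub g H = L}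

/-- A subgroup `H ≤ Γ` is coamenable if the action of `Γ` on `Γ/H` is amenable: there is
a sequence of nonempty finite subsets `Fₖ ⊆ Γ/H` with `|g•Fₖ ∪ Fₖ|/|Fₖ| → 1` for all `g`. -/
noncomputable def Coamenable {Γ : Type*} [Group Γ] (H : Subgroup Γ) : Prop :=
  ∃ F : ℕ → Finset (Γ ⧸ H), (∀ k, (F k).Nonempty) ∧
    ∀ g : Γ, Filter.Tendsto
      (fun k => ((((F k).image (fun x => g • x)) ∪ F k).card : ℝ) / ((F k).card : ℝ))
      Filter.atTop (nhds 1)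

/-- A `Γ`-system: a nonempty compact metrizable space with a continuous `Γ`-action
(by homeomorphisms). -/
structure GammaSystem (Γ : Type) [Group Γ] where
  X : Type
  [topX : TopologicalSpace X]
  [compactX : CompactSpace X]
  [metrizableX : TopologicalSpace.MetrizableSpace X]
  [nonemptyX : Nonempty X]
  [act : MulAction Γ X]
  [cts : ContinuousConstSMul Γ X]

attribute [instance] GammaSystem.topX GammaSystem.compactX GammaSystem.metrizableX
  GammaSystem.nonemptyX GammaSystem.act GammaSystem.cts

/-- The set of elements fixing pointwise some open neighborhood of `x`. -/
def stab0 (Γ : Type*) [Group Γ] {X : Type*} [TopologicalSpace X] [MulAction Γ X]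
    (x : X) : Set Γ :=
  {γ : Γ | ∃ U : Set X, IsOpen U ∧ x ∈ U ∧ ∀ y ∈ U, γ • y = y}

/-- A `Γ`-system is `Z`-proper if every stabilizer coincides with the corresponding
neighborhood stabilizer and belongs to `Z`. -/
def IsZProper (Γ : Type*) [Group Γ] {X : Type*} [TopologicalSpace X] [MulAction Γ X]
    (Z : Set (Subgroup Γ)) : Prop :=
  ∀ x : X, ((MulAction.stabilizer Γ x : Subgroup Γ) : Set Γ) = stab0 Γ x ∧
    MulAction.stabilizer Γ x ∈ Z

/-- A `Γ`-system admits an invariant Borel probability measure. -/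
def HasInvariantProbabilityMeasure {Γ : Type} [Group Γ] (S : GammaSystem Γ) : Prop :=
  ∃ μ : @MeasureTheory.Measure S.X (borel S.X),
    @MeasureTheory.IsProbabilityMeasure S.X (borel S.X) μ ∧
    ∀ g : Γ, @MeasureTheory.MeasurePreserving S.X S.X (borel S.X) (borel S.X)
      (fun x => g • x) μ μ

/-!
Let `A` be a `Γ`-set. If the action on `A` is amenable, then averaging point masses over Følner
sets along an equivariant map `A → X` into a compact `Γ`-space and passing to a weak-* limit gives
an invariant measure on `X`. Orbit maps `Γ ⧸ Stab(x) → X` thus settle the forward implication.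

If the action on `A` is not amenable, finitely many group elements expand every finite subset of
`A` by a factor of two, and Hall's marriage theorem yields a mass transport of finite range in
which every point sends mass two and receives mass at most one. Moreover every `g ∈ Γ` admits a
colouring of `A` by three colours in which no point moved by `g` has the colour of its image.
Record transport and colourings as labels on `A`, and let `X` be the closure of the set of
itineraries of points of `A` in the corresponding shift space. The transport survives on `X` and
excludes an invariant measure. The colourings survive as well, so fixed-point sets are clopen and
no stabilizer grows: `X` is `Z`-proper when the stabilizers of `A` lie in `Z`. Take `A = Γ ⧸ H`.
-/

section Amenable

open Filter Topology Finset
open scoped Pointwise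

/-- Amenability of an action on a set, expressed by a Følner sequence; `Coamenable H` is the case
of the coset space `Γ ⧸ H`. -/
def AmenableAction (Γ A : Type*) [DecidableEq A] [Group Γ] [MulAction Γ A] : Prop :=
  ∃ F : ℕ → Finset A, (∀ k, (F k).Nonempty) ∧
    ∀ g : Γ, Tendsto (fun k => (#((F k).image (g • ·) ∪ F k) : ℝ) / #(F k)) atTop (𝓝 1)

lemma coamenable_iff_amenableAction {Γ : Type*} [Group Γ] {H : Subgroup Γ} :
    Coamenable H ↔ AmenableAction Γ (Γ ⧸ H) :=
  Iff.rfl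

variable {Γ A : Type*} [DecidableEq A] [Group Γ] [MulAction Γ A]

lemma amenableAction_of_exists_almost_invariant [Countable Γ]
    (h : ∀ (S : Finset Γ) (ε : ℝ), 0 < ε → ∃ F : Finset A, F.Nonempty ∧
      ∀ g ∈ S, (#(F.image (g • ·) ∪ F) : ℝ) ≤ (1 + ε) * #F) :
    AmenableAction Γ A := by
  obtain ⟨e, he⟩ := exists_injective_nat Γ
  have hfin (k : ℕ) : {g : Γ | e g ≤ k}.Finite := (Set.finite_Iic k).preimage he.injOn
  choose F hF hFle using fun k : ℕ => h (hfin k).toFinset (1 / ((k : ℝ) + 1)) (by positivity)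
  have hcard (k : ℕ) : (0 : ℝ) < #(F k) := by exact_mod_cast (hF k).card_pos
  have hlim : Tendsto (fun k : ℕ => 1 + 1 / ((k : ℝ) + 1)) atTop (𝓝 1) := by
    simpa using tendsto_one_div_add_atTop_nhds_zero_nat.const_add (1 : ℝ)
  refine ⟨F, hF, fun g =>
    tendsto_of_tendsto_of_tendsto_of_le_of_le' tendsto_const_nhds hlim ?_ ?_⟩
  · refine Eventually.of_forall fun k => (one_le_div (hcard k)).2 ?_
    exact_mod_cast card_le_card subset_union_right
  · filter_upwards [eventually_ge_atTop (e g)] with k hk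
    exact (div_le_iff₀ (hcard k)).2 (hFle k g (by simpa using hk))

lemma image_smul_union_subset_insert_one_smul {S : Finset Γ} {g : Γ} (hg : g ∈ S)
    (F : Finset A) : F.image (g • ·) ∪ F ⊆ insert 1 S • F := by
  refine union_subset (image_subset_iff.2 fun x hx => ?_) fun x hx => ?_
  · exact smul_mem_smul (mem_insert_of_mem hg) hx
  · simpa using smul_mem_smul (mem_insert_self (1 : Γ) S) hx

lemma exists_expanding_of_not_amenableAction [Countable Γ] (h : ¬ AmenableAction Γ A) :
    ∃ (S : Finset Γ) (ε : ℝ), 0 < ε ∧ ∀ F : Finset A, (1 + ε) * #F ≤ #(S • F) := by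
  have hexp := mt amenableAction_of_exists_almost_invariant h
  push Not at hexp
  obtain ⟨S, ε, hε, hS⟩ := hexp
  refine ⟨insert 1 S, ε, hε, fun F => ?_⟩
  obtain rfl | hF := F.eq_empty_or_nonempty
  · simp
  · obtain ⟨g, hg, hlt⟩ := hS F hF
    exact hlt.le.trans (mod_cast card_le_card (image_smul_union_subset_insert_one_smul hg F))

lemma pow_mul_card_le_card_pow_smul {S : Finset Γ} {r : ℝ} (hr : 0 ≤ r)
    (hS : ∀ F : Finset A, r * #F ≤ #(S • F)) (n : ℕ) (F : Finset A) :
    r ^ n * #F ≤ #(S ^ n • F) := by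
  induction n with
  | zero => simp
  | succ n ih =>
    calc r ^ (n + 1) * #F = r * (r ^ n * #F) := by ring
      _ ≤ r * #(S ^ n • F) := mul_le_mul_of_nonneg_left ih hr
      _ ≤ #(S • S ^ n • F) := hS _
      _ = #(S ^ (n + 1) • F) := by rw [pow_succ', mul_smul]

lemma exists_doubling_of_not_amenableAction [Countable Γ] (h : ¬ AmenableAction Γ A) :
    ∃ S : Finset Γ, ∀ F : Finset A, 2 * #F ≤ #(S • F) := by
  obtain ⟨S, ε, hε, hS⟩ := exists_expanding_of_not_amenableAction h
  obtain ⟨n, hn⟩ := pow_unbounded_of_one_lt (2 : ℝ) (lt_add_of_pos_right 1 hε)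
  refine ⟨S ^ n, fun F => ?_⟩
  have : (2 : ℝ) * #F ≤ #(S ^ n • F) :=
    (mul_le_mul_of_nonneg_right hn.le (Nat.cast_nonneg _)).trans
      (pow_mul_card_le_card_pow_smul (by positivity) hS n F)
  exact_mod_cast this

lemma exists_injective_smul_of_doubling {S : Finset Γ}
    (hS : ∀ F : Finset A, 2 * #F ≤ #(S • F)) :
    ∃ σ : A → Bool → Γ, (∀ a i, σ a i ∈ S) ∧
      Function.Injective fun p : A × Bool => σ p.1 p.2 • p.1 := by
  have hall (T : Finset (A × Bool)) : #T ≤ #(T.biUnion fun p => S.image (· • p.1)) := by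
    have hunion : T.biUnion (fun p => S.image (· • p.1)) = S • T.image Prod.fst := by
      ext a
      simp only [mem_biUnion, Finset.mem_smul, mem_image]
      grind
    calc #T ≤ #(T.image Prod.fst ×ˢ (univ : Finset Bool)) :=
          card_le_card fun p hp => mem_product.2 ⟨mem_image_of_mem _ hp, mem_univ _⟩
      _ = 2 * #(T.image Prod.fst) := by rw [card_product, mul_comm, card_univ, Fintype.card_bool]
      _ ≤ #(S • T.image Prod.fst) := hS _
      _ = _ := by rw [hunion]
  obtain ⟨φ, hφ, hmem⟩ := (all_card_le_biUnion_card_iff_exists_injective _).1 hall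
  choose σ hσ hσφ using fun (a : A) (i : Bool) => mem_image.1 (hmem (a, i))
  exact ⟨σ, hσ, by simpa only [hσφ] using hφ⟩

/-- A mass transport on a `Γ`-set along the elements of `S`: the point `a` sends the mass `N s a`
to `s • a`, so that it sends `2` and receives at most `1` in total. It witnesses non-amenability;
values in `Fin 3` make it usable as a label from a finite alphabet. -/
structure IsDoublingTransport (S : Finset Γ) (N : Γ → A → Fin 3) : Prop where
  sum_sent : ∀ a, ∑ s ∈ S, (N s a : ℕ) = 2
  sum_received_le : ∀ a, ∑ s ∈ S, (N s (s⁻¹ • a) : ℕ) ≤ 1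

omit [DecidableEq A] in
lemma exists_isDoublingTransport_of_injective_smul {S : Finset Γ} {σ : A → Bool → Γ}
    (hσS : ∀ a i, σ a i ∈ S) (hσ : Function.Injective fun p : A × Bool => σ p.1 p.2 • p.1) :
    ∃ N : Γ → A → Fin 3, IsDoublingTransport S N := by
  refine ⟨fun s a => ⟨#{i | σ a i = s},
    Nat.lt_succ_of_le ((card_filter_le _ _).trans (by simp))⟩, fun a => ?_, fun a => ?_⟩
  · exact (card_eq_sum_card_fiberwise (s := (univ : Finset Bool)) fun i _ => hσS a i).symm
  · simp only [← card_sigma, card_le_one]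
    rintro ⟨s, i⟩ hs ⟨t, j⟩ ht
    simp only [mem_sigma, mem_filter, mem_univ, true_and] at hs ht
    have hpair : (s⁻¹ • a, i) = (t⁻¹ • a, j) := hσ (by simp only [hs.2, ht.2, smul_inv_smul])
    obtain ⟨hsrc, rfl⟩ := Prod.mk.inj hpair
    obtain rfl : s = t := by rw [← hs.2, ← ht.2, hsrc]
    rfl

lemma exists_isDoublingTransport_of_not_amenableAction [Countable Γ]
    (h : ¬ AmenableAction Γ A) :
    ∃ (S : Finset Γ) (N : Γ → A → Fin 3), IsDoublingTransport S N := by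
  obtain ⟨S, hS⟩ := exists_doubling_of_not_amenableAction h
  obtain ⟨σ, hσS, hσ⟩ := exists_injective_smul_of_doubling hS
  exact ⟨S, exists_isDoublingTransport_of_injective_smul hσS hσ⟩

end Amenable

section InvariantMeasure

open MeasureTheory Filter Topology Finset
open scoped BoundedContinuousFunction ENNReal

lemma measurePreserving_of_tendsto_integral_comp_sub {ι X : Type*} {l : Filter ι} [l.NeBot]
    [TopologicalSpace X] [HasOuterApproxClosed X] [MeasurableSpace X] [BorelSpace X]
    {ν : ι → ProbabilityMeasure X} {μ : ProbabilityMeasure X} (hν : Tendsto ν l (𝓝 μ))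
    {T : X → X} (hT : Continuous T)
    (hinv : ∀ f : X →ᵇ ℝ, Tendsto (fun i => ∫ x, f (T x) ∂ν i - ∫ x, f x ∂ν i) l (𝓝 0)) :
    MeasurePreserving T (μ : Measure X) μ := by
  rw [ProbabilityMeasure.tendsto_iff_forall_integral_tendsto] at hν
  have := Measure.isProbabilityMeasure_map (μ := (μ : Measure X)) hT.measurable.aemeasurable
  refine ⟨hT.measurable, ext_of_forall_integral_eq_of_IsFiniteMeasure fun f => ?_⟩
  rw [integral_map hT.measurable.aemeasurable f.continuous.measurable.aestronglyMeasurable]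
  have hlim := (hν (f.compContinuous ⟨T, hT⟩)).sub (hν f)
  exact sub_eq_zero.1 (tendsto_nhds_unique hlim (hinv f))

lemma exists_measurePreserving_of_tendsto_integral_comp_sub {ι G X : Type*} {l : Filter ι}
    [l.NeBot] [TopologicalSpace X] [CompactSpace X] [TopologicalSpace.MetrizableSpace X]
    [MeasurableSpace X] [BorelSpace X] (ν : ι → ProbabilityMeasure X)
    {T : G → X → X} (hT : ∀ g, Continuous (T g))
    (hinv : ∀ g (f : X →ᵇ ℝ),
      Tendsto (fun i => ∫ x, f (T g x) ∂ν i - ∫ x, f x ∂ν i) l (𝓝 0)) :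
    ∃ μ : Measure X, IsProbabilityMeasure μ ∧ ∀ g, MeasurePreserving (T g) μ μ := by
  obtain ⟨μ, -, hμ⟩ := isCompact_univ.exists_mapClusterPt (f := l) (u := ν) (by simp)
  obtain ⟨U, hUl, hU⟩ := mapClusterPt_iff_ultrafilter.1 hμ
  exact ⟨μ, inferInstance, fun g =>
    measurePreserving_of_tendsto_integral_comp_sub hU (hT g) fun f => (hinv g f).mono_left hUl⟩

/-- The uniform probability measure on the points `π a`, `a ∈ F`, counted with multiplicity. It is
the zero measure when `F` is empty. -/
noncomputable def empiricalMeasure {A X : Type*} [MeasurableSpace X] (F : Finset A) (π : A → X) :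
    Measure X :=
  (#F : ℝ≥0∞)⁻¹ • ∑ a ∈ F, Measure.dirac (π a)

lemma isProbabilityMeasure_empiricalMeasure {A X : Type*} [MeasurableSpace X] {F : Finset A}
    (hF : F.Nonempty) (π : A → X) : IsProbabilityMeasure (empiricalMeasure F π) := by
  constructor
  simp only [empiricalMeasure, Measure.smul_apply, Measure.finsetSum_apply, measure_univ,
    sum_const, smul_eq_mul, nsmul_eq_mul, mul_one]
  exact ENNReal.inv_mul_cancel (by simpa using hF.ne_empty) (by simp)

lemma integral_empiricalMeasure {A X E : Type*} [MeasurableSpace X] [NormedAddCommGroup E]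
    [NormedSpace ℝ E] [CompleteSpace E] (F : Finset A) (π : A → X) {f : X → E}
    (hf : StronglyMeasurable f) :
    ∫ x, f x ∂empiricalMeasure F π = (#F : ℝ)⁻¹ • ∑ a ∈ F, f (π a) := by
  rw [empiricalMeasure, integral_smul_measure,
    integral_finsetSum_measure fun a _ => integrable_dirac' hf enorm_lt_top]
  simp [integral_dirac' _ _ hf]

lemma norm_sum_sub_sum_le_of_subset {A E : Type*} [SeminormedAddCommGroup E]
    {B U : Finset A} (hBU : B ⊆ U) {f : A → E} {M : ℝ} (hM : ∀ a, ‖f a‖ ≤ M) :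
    ‖∑ a ∈ U, f a - ∑ a ∈ B, f a‖ ≤ M * (#U - #B) := by
  calc ‖∑ a ∈ U, f a - ∑ a ∈ B, f a‖ = ‖∑ a ∈ U \ B, f a‖ := by
        rw [sum_sdiff_eq_sub hBU]
    _ ≤ #(U \ B) • M := norm_sum_le_of_le _ (fun a _ => hM a) |>.trans (sum_const M).le
    _ = M * (#U - #B) := by
        rw [card_sdiff_of_subset hBU, nsmul_eq_mul, Nat.cast_sub (card_le_card hBU), mul_comm]

variable {Γ A : Type*} [DecidableEq A] [Group Γ] [MulAction Γ A]

lemma norm_sum_smul_sub_sum_le {E : Type*} [SeminormedAddCommGroup E] (F : Finset A) (g : Γ)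
    {f : A → E} {M : ℝ} (hM : ∀ a, ‖f a‖ ≤ M) :
    ‖∑ a ∈ F, f (g • a) - ∑ a ∈ F, f a‖ ≤ 2 * M * (#(F.image (g • ·) ∪ F) - #F) := by
  have hinj : Function.Injective (g • · : A → A) := MulAction.injective g
  have hsum : ∑ a ∈ F, f (g • a) = ∑ a ∈ F.image (g • ·), f a := (sum_image hinj.injOn).symm
  have himage := norm_sum_sub_sum_le_of_subset
    (subset_union_left : F.image (g • ·) ⊆ F.image (g • ·) ∪ F) hM
  have hself := norm_sum_sub_sum_le_of_subset
    (subset_union_right : F ⊆ F.image (g • ·) ∪ F) hM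
  rw [card_image_of_injective F hinj, norm_sub_rev] at himage
  rw [hsum]
  linarith [norm_sub_le_norm_sub_add_norm_sub (∑ a ∈ F.image (g • ·), f a)
    (∑ a ∈ F.image (g • ·) ∪ F, f a) (∑ a ∈ F, f a)]

theorem AmenableAction.exists_invariant_measure (h : AmenableAction Γ A) {X : Type*}
    [TopologicalSpace X] [CompactSpace X] [TopologicalSpace.MetrizableSpace X]
    [MeasurableSpace X] [BorelSpace X] [MulAction Γ X] [ContinuousConstSMul Γ X]
    (π : A →[Γ] X) :
    ∃ μ : Measure X, IsProbabilityMeasure μ ∧ ∀ g : Γ, MeasurePreserving (g • ·) μ μ := by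
  obtain ⟨F, hF, hfolner⟩ := h
  refine exists_measurePreserving_of_tendsto_integral_comp_sub (l := atTop)
    (fun k => ⟨empiricalMeasure (F k) π, isProbabilityMeasure_empiricalMeasure (hF k) π⟩)
    (fun g : Γ => continuous_const_smul g) fun g f => ?_
  have hbound : Tendsto (fun k => 2 * ‖f‖ *
      ((#((F k).image (g • ·) ∪ F k) : ℝ) / #(F k) - 1)) atTop (𝓝 0) := by
    simpa using ((hfolner g).sub_const 1).const_mul (2 * ‖f‖)
  refine squeeze_zero_norm (fun k => ?_) hbound
  have hcard : (0 : ℝ) < #(F k) := by exact_mod_cast (hF k).card_pos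
  have hf : StronglyMeasurable f := f.continuous.stronglyMeasurable
  have hfg : StronglyMeasurable fun x => f (g • x) :=
    (f.continuous.comp (continuous_const_smul g)).stronglyMeasurable
  have hsum := norm_sum_smul_sub_sum_le (F k) g fun a => f.norm_coe_le_norm (π a)
  simp only [map_smul] at hsum
  simp only [ProbabilityMeasure.coe_mk, integral_empiricalMeasure _ _ hf,
    integral_empiricalMeasure _ _ hfg, smul_eq_mul]
  rw [← mul_sub, norm_mul, Real.norm_of_nonneg (inv_nonneg.2 hcard.le)]
  calc _ ≤ (#(F k) : ℝ)⁻¹ * _ := mul_le_mul_of_nonneg_left hsum (inv_nonneg.2 hcard.le)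
    _ = _ := by field_simp

lemma hasInvariantProbabilityMeasure_iff {Γ : Type} [Group Γ] {S : GammaSystem Γ}
    [inst : MeasurableSpace S.X] [BorelSpace S.X] :
    HasInvariantProbabilityMeasure S ↔
      ∃ μ : Measure S.X, IsProbabilityMeasure μ ∧
        ∀ g : Γ, MeasurePreserving (g • ·) μ μ := by
  obtain rfl : inst = borel S.X := BorelSpace.measurable_eq
  rfl

lemma hasInvariantProbabilityMeasure_of_coamenable_stabilizer {Γ : Type} [Group Γ]
    {S : GammaSystem Γ} {x : S.X} (hx : Coamenable (MulAction.stabilizer Γ x)) :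
    HasInvariantProbabilityMeasure S := by
  borelize S.X
  exact hasInvariantProbabilityMeasure_iff.2 <|
    (coamenable_iff_amenableAction.1 hx).exists_invariant_measure
      ⟨MulAction.ofQuotientStabilizer Γ x, MulAction.ofQuotientStabilizer_smul Γ x⟩

end InvariantMeasure

section MassTransport

open MeasureTheory
open scoped ENNReal

variable {Γ X : Type*} [Group Γ] [MulAction Γ X] [MeasurableSpace X] {μ : Measure X}

lemma lintegral_sum_inv_smul (hμ : ∀ g : Γ, MeasurePreserving (g • · : X → X) μ μ)
    {S : Finset Γ} {n : Γ → X → ℝ≥0∞} (hn : ∀ s, Measurable (n s)) :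
    ∫⁻ x, ∑ s ∈ S, n s (s⁻¹ • x) ∂μ = ∫⁻ x, ∑ s ∈ S, n s x ∂μ := by
  have hn' (s : Γ) : Measurable fun x => n s (s⁻¹ • x) := (hn s).comp (hμ s⁻¹).measurable
  rw [lintegral_finsetSum _ fun s _ => hn' s, lintegral_finsetSum _ fun s _ => hn s]
  exact Finset.sum_congr rfl fun s _ => (hμ s⁻¹).lintegral_comp (hn s)

lemma IsDoublingTransport.not_forall_measurePreserving [IsProbabilityMeasure μ]
    {S : Finset Γ} {N : Γ → X → Fin 3} (hN : IsDoublingTransport S N)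
    (hmeas : ∀ s, Measurable (N s)) :
    ¬ ∀ g : Γ, MeasurePreserving (g • · : X → X) μ μ := by
  intro hμ
  have hmeas' (s : Γ) : Measurable fun x => ((N s x : ℕ) : ℝ≥0∞) :=
    (measurable_of_finite fun k : Fin 3 => ((k : ℕ) : ℝ≥0∞)).comp (hmeas s)
  have hle : (2 : ℝ≥0∞) ≤ 1 := calc
    2 = ∫⁻ x, ∑ s ∈ S, ((N s x : ℕ) : ℝ≥0∞) ∂μ := by
      simp [← Nat.cast_sum, hN.sum_sent]
    _ = ∫⁻ x, ∑ s ∈ S, ((N s (s⁻¹ • x) : ℕ) : ℝ≥0∞) ∂μ := (lintegral_sum_inv_smul hμ hmeas').symm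
    _ ≤ ∫⁻ _, 1 ∂μ := lintegral_mono fun x => by
      beta_reduce
      rw [← Nat.cast_sum, Nat.cast_le_one]
      exact hN.sum_received_le x
    _ = 1 := by simp
  norm_num at hle

end MassTransport

lemma IsDoublingTransport.of_denseRange {Γ A X : Type*} [Group Γ] [MulAction Γ A]
    [MulAction Γ X] [TopologicalSpace X] [ContinuousConstSMul Γ X] {π : A →[Γ] X}
    (hπ : DenseRange π) {S : Finset Γ} {N : Γ → X → Fin 3} (hcont : ∀ s, Continuous (N s))
    (hN : IsDoublingTransport S fun s a => N s (π a)) : IsDoublingTransport S N where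
  sum_sent x := by
    have hval (s : Γ) : Continuous fun x => (N s x : ℕ) :=
      continuous_of_discreteTopology.comp (hcont s)
    exact hπ.induction_on x (isClosed_eq (by fun_prop) continuous_const) hN.sum_sent
  sum_received_le x := by
    have hval (s : Γ) : Continuous fun x => (N s (s⁻¹ • x) : ℕ) :=
      continuous_of_discreteTopology.comp ((hcont s).comp (continuous_const_smul _))
    refine hπ.induction_on x (isClosed_le (by fun_prop) continuous_const) fun a => ?_
    simpa only [map_smul] using hN.sum_received_le a

section Coloring

/-- A colouring in which no point moved by `f` has the same colour as its image. -/
def IsProperColoring {A D : Type*} (f : A → A) (c : A → D) : Prop :=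
  ∀ a, f a ≠ a → c (f a) ≠ c a

lemma exists_greedy_coloring {A D : Type*} [LinearOrder A] [WellFoundedLT A] [Fintype D]
    (nbhd : A → Finset A) (hnbhd : ∀ a, (nbhd a).card < Fintype.card D) :
    ∃ c : A → D, ∀ a, ∀ b ∈ nbhd a, b < a → c b ≠ c a := by
  have hfresh (a : A) (c : ∀ b, b < a → D) : ∃ d, ∀ b ∈ nbhd a, ∀ hb : b < a, c b hb ≠ d := by
    let used : Finset D := ((nbhd a).subtype (· < a)).image
      fun b : {b // b < a} => c b b.2
    have hused : used.card < (Finset.univ : Finset D).card := calc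
      used.card ≤ ((nbhd a).subtype (· < a)).card := Finset.card_image_le
      _ ≤ (nbhd a).card := (Finset.card_subtype _ _).trans_le (Finset.card_filter_le _ _)
      _ < _ := hnbhd a
    obtain ⟨d, -, hd⟩ := Finset.exists_mem_notMem_of_card_lt_card hused
    exact ⟨d, fun b hb hba hcd => hd (Finset.mem_image.2 ⟨⟨b, hba⟩, by simpa using hb, hcd⟩)⟩
  choose fresh hfresh using hfresh
  refine ⟨wellFounded_lt.fix fresh, fun a b hb hba => ?_⟩
  rw [wellFounded_lt.fix_eq fresh a]
  exact hfresh a (fun b _ => wellFounded_lt.fix fresh b) b hb hba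

lemma exists_isProperColoring_fin_three {A : Type*} (σ : Equiv.Perm A) :
    ∃ c : A → Fin 3, IsProperColoring σ c := by
  obtain ⟨_, _⟩ := exists_wellFoundedLT A
  obtain ⟨c, hc⟩ := exists_greedy_coloring (D := Fin 3) (fun a => {σ a, σ⁻¹ a})
    fun a => Finset.card_le_two.trans_lt (by simp)
  refine ⟨c, fun a ha => ?_⟩
  obtain hlt | hgt := lt_or_gt_of_ne ha
  · exact hc a (σ a) (by simp) hlt
  · exact (hc (σ a) a (by simp) hgt).symm

variable {A X D : Type*} {f : A → A} {φ : X → X} {π : A → X} {κ : X → D}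

lemma IsProperColoring.isFixedPt_iff (h : IsProperColoring f (κ ∘ π))
    (hsemi : Function.Semiconj π f φ) {a : A} :
    Function.IsFixedPt φ (π a) ↔ Function.IsFixedPt f a := by
  refine ⟨fun ha => not_imp_not.1 (h a) ?_, fun ha => ha.map hsemi⟩
  rw [Function.comp_apply, hsemi a, ha]
  rfl

variable [TopologicalSpace X] [TopologicalSpace D] [DiscreteTopology D]

lemma IsProperColoring.of_denseRange [T2Space X] (h : IsProperColoring f (κ ∘ π))
    (hπ : DenseRange π) (hsemi : Function.Semiconj π f φ) (hφ : Continuous φ)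
    (hκ : Continuous κ) : IsProperColoring φ κ := by
  simp only [IsProperColoring, ne_eq, ← or_iff_not_imp_left]
  refine fun x => hπ.induction_on x ?_ fun a => ?_
  · exact (isClosed_eq hφ continuous_id).union
      ((isClosed_discrete {p : D × D | p.1 ≠ p.2}).preimage ((hκ.comp hφ).prodMk hκ))
  · rw [← hsemi a, or_iff_not_imp_left]
    exact fun ha => h a fun hfa => ha (congrArg π hfa)

lemma IsProperColoring.isClopen_fixedPoints (h : IsProperColoring φ κ) (hφ : Continuous φ)
    (hκ : Continuous κ) : IsClopen (Function.fixedPoints φ) := by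
  have : Function.fixedPoints φ = {x | κ (φ x) = κ x} :=
    Set.ext fun x => ⟨congrArg κ, not_imp_not.1 (h x)⟩
  rw [this]
  exact (isClopen_discrete {p : D × D | p.1 = p.2}).preimage ((hκ.comp hφ).prodMk hκ)

end Coloring

section Proper

variable {Γ X : Type*} [Group Γ] [MulAction Γ X] [TopologicalSpace X]

lemma stabilizer_eq_stab0 (h : ∀ g : Γ, IsOpen (MulAction.fixedBy X g)) (x : X) :
    (MulAction.stabilizer Γ x : Set Γ) = stab0 Γ x :=
  Set.Subset.antisymm (fun g hg => ⟨_, h g, hg, fun _ hy => hy⟩) fun _ ⟨_, _, hx, hU⟩ => hU x hx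

lemma continuous_stabilizer (h : ∀ g : Γ, IsClopen (MulAction.fixedBy X g)) :
    Continuous (MulAction.stabilizer Γ : X → Subgroup Γ) := by
  refine continuous_induced_rng.2 (continuous_pi fun g => (continuous_bool_rng true).2 ?_)
  convert h g using 1
  ext x
  simp

lemma isZProper_of_denseRange {A : Type*} {Z : Set (Subgroup Γ)} (hZ : IsClosed Z)
    (hfix : ∀ g : Γ, IsClopen (MulAction.fixedBy X g)) {π : A → X} (hπ : DenseRange π)
    (hstab : ∀ a, MulAction.stabilizer Γ (π a) ∈ Z) : IsZProper Γ (X := X) Z := fun x =>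
  ⟨stabilizer_eq_stab0 (fun g => (hfix g).isOpen) x,
    hπ.induction_on x (hZ.preimage (continuous_stabilizer hfix)) hstab⟩

end Proper

section Itinerary

attribute [local instance] arrowAction

variable {Γ A C : Type*} [Group Γ] [MulAction Γ A]

/-- The labels seen along the orbit of a point. The inverse makes it equivariant for `arrowAction`,
the action of `Γ` on `Γ → C` by left translation of the argument. -/
def itinerary (Γ : Type*) [Group Γ] [MulAction Γ A] (ℓ : A → C) : A →[Γ] (Γ → C) where
  toFun a t := ℓ (t⁻¹ • a)
  map_smul' g a := funext fun t => congrArg ℓ <| by simp [mul_smul]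

variable [TopologicalSpace C]

omit [MulAction Γ A] in
lemma continuousConstSMul_arrowAction : ContinuousConstSMul Γ (Γ → C) :=
  ⟨fun g => continuous_pi fun t => continuous_apply (g⁻¹ • t)⟩

attribute [local instance] continuousConstSMul_arrowAction

/-- The subshift generated by the itineraries of all points of `A`. -/
def itineraryClosure (Γ : Type*) [Group Γ] [MulAction Γ A] (ℓ : A → C) :
    SubMulAction Γ (Γ → C) where
  carrier := closure (Set.range (itinerary Γ ℓ))
  smul_mem' g _ hz := map_mem_closure (continuous_const_smul g) hz <|
    Set.forall_mem_range.2 fun a => ⟨g • a, map_smul _ g a⟩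

theorem exists_gammaSystem_extending {Γ : Type} [Group Γ] [Countable Γ] [MulAction Γ A]
    [Nonempty A] {C : Type} [TopologicalSpace C] [CompactSpace C]
    [TopologicalSpace.MetrizableSpace C] (ℓ : A → C) :
    ∃ (S : GammaSystem Γ) (π : A →[Γ] S.X) (L : S.X → C),
      DenseRange π ∧ Continuous L ∧ ∀ a, L (π a) = ℓ a := by
  let X := itineraryClosure Γ ℓ
  let π : A →[Γ] X :=
    { toFun a := ⟨itinerary Γ ℓ a, subset_closure ⟨a, rfl⟩⟩
      map_smul' g a := Subtype.ext (map_smul (itinerary Γ ℓ) g a) }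
  have hcompact : CompactSpace X := isCompact_iff_compactSpace.1 isClosed_closure.isCompact
  have hmetrizable : TopologicalSpace.MetrizableSpace X :=
    Topology.IsEmbedding.subtypeVal.metrizableSpace
  have hcont : ContinuousConstSMul Γ X := ⟨fun g =>
    (continuous_subtype_val.const_smul g).subtype_mk _⟩
  have hdense : DenseRange π := Subtype.dense_iff.2 <| by
    rw [← Set.range_comp]
    exact subset_rfl
  exact ⟨{ X := X, nonemptyX := .map π ‹_› }, π, fun z => z.1 1, hdense,
    (continuous_apply 1).comp continuous_subtype_val, fun a =>
      congrArg ℓ (by simp : (1 : Γ)⁻¹ • a = a)⟩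

end Itinerary

theorem exists_gammaSystem_of_not_amenableAction {Γ : Type} [Group Γ] [Countable Γ] {A : Type*}
    [DecidableEq A] [Nonempty A] [MulAction Γ A] (h : ¬ AmenableAction Γ A) :
    ∃ (S : GammaSystem Γ) (π : A →[Γ] S.X), DenseRange π ∧
      (∀ g : Γ, IsClopen (MulAction.fixedBy S.X g)) ∧
      (∀ a, MulAction.stabilizer Γ (π a) = MulAction.stabilizer Γ a) ∧
      ¬ HasInvariantProbabilityMeasure S := by
  obtain ⟨T, N, hN⟩ := exists_isDoublingTransport_of_not_amenableAction h
  choose c hc using fun g : Γ =>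
    exists_isProperColoring_fin_three (MulAction.toPerm g : Equiv.Perm A)
  obtain ⟨S, π, L, hπ, hL, hLπ⟩ :=
    exists_gammaSystem_extending (Γ := Γ) fun a => ((c · a), (N · a))
  have hcolor_cont (g : Γ) : Continuous fun x => (L x).1 g := by fun_prop
  have hmass_cont (s : Γ) : Continuous fun x => (L x).2 s := by fun_prop
  have hcolor (g : Γ) : IsProperColoring (g • · : A → A) ((fun x => (L x).1 g) ∘ π) := by
    have hrestrict : (fun x => (L x).1 g) ∘ π = c g := funext fun a => by simp [hLπ]
    exact hrestrict ▸ hc g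
  have hsemi (g : Γ) : Function.Semiconj π (g • ·) (g • ·) := map_smul π g
  refine ⟨S, π, hπ, fun g => ?_, fun a => ?_, ?_⟩
  · exact ((hcolor g).of_denseRange hπ (hsemi g) (continuous_const_smul g)
      (hcolor_cont g)).isClopen_fixedPoints (continuous_const_smul g) (hcolor_cont g)
  · ext g
    exact (hcolor g).isFixedPt_iff (hsemi g)
  · borelize S.X
    rw [hasInvariantProbabilityMeasure_iff]
    rintro ⟨μ, _, hμ⟩
    have hmass : IsDoublingTransport T fun s x => (L x).2 s :=
      .of_denseRange hπ hmass_cont (by simpa only [hLπ] using hN)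
    exact hmass.not_forall_measurePreserving (fun s => (hmass_cont s).measurable) hμ

lemma stabilizer_quotient_mem {Γ : Type*} [Group Γ] {Z : Set (Subgroup Γ)}
    (hZ : ∀ g : Γ, ∀ H ∈ Z, conjSub g H ∈ Z) {H : Subgroup Γ} (hH : H ∈ Z) (a : Γ ⧸ H) :
    MulAction.stabilizer Γ a ∈ Z := by
  obtain ⟨g, rfl⟩ := MulAction.exists_smul_eq Γ ((1 : Γ) : Γ ⧸ H) a
  rw [MulAction.stabilizer_smul_eq_stabilizer_map_conj, MulAction.stabilizer_quotient]
  exact hZ g H hH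

lemma countable_of_group_fg (Γ : Type*) [Group Γ] [Group.FG Γ] : Countable Γ := by
  obtain ⟨α, _, φ, hφ⟩ := Group.fg_iff_exists_freeGroup_hom_surjective_finite.1 ‹Group.FG Γ›
  exact hφ.countable

theorem coamenable_iff_all_zproper_systems_have_invariant_measure_general
    {Γ : Type} [Group Γ] [Countable Γ] {Z : Set (Subgroup Γ)} (hclosed : IsClosed Z)
    (hconj : ∀ g : Γ, ∀ H ∈ Z, conjSub g H ∈ Z) :
    (∀ H ∈ Z, Coamenable H) ↔
    (∀ S : GammaSystem Γ, IsZProper Γ (X := S.X) Z → HasInvariantProbabilityMeasure S) := by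
  constructor
  · intro hco S hS
    obtain ⟨x⟩ := S.nonemptyX
    exact hasInvariantProbabilityMeasure_of_coamenable_stabilizer (hco _ (hS x).2)
  · intro hinv H hH
    by_contra hco
    obtain ⟨S, π, hπ, hfix, hstab, hnot⟩ :=
      exists_gammaSystem_of_not_amenableAction (mt coamenable_iff_amenableAction.2 hco)
    refine hnot (hinv S (isZProper_of_denseRange hclosed hfix hπ fun a => ?_))
    rw [hstab a]
    exact stabilizer_quotient_mem hconj hH a

/-- a URS `Z` of a finitely generated group is coamenable iff every
`Z`-proper system admits an invariant Borel probability measure. -/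
theorem coamenable_iff_all_zproper_systems_have_invariant_measure
    {Γ : Type} [Group Γ] [Group.FG Γ]
    (Z : Set (Subgroup Γ)) (hZ : IsURS Z) :
    (∀ H ∈ Z, Coamenable H) ↔
    (∀ S : GammaSystem Γ, IsZProper Γ (X := S.X) Z → HasInvariantProbabilityMeasure S) :=
  have := countable_of_group_fg Γ
  coamenable_iff_all_zproper_systems_have_invariant_measure_general hZ.closed hZ.invariant
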